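/- arXiv:1404.1941 — 2 statements merged into one kernel-verified Lean document; each statement's English description precedes it below -/
import Mathlib

section
/- Let ψ be the Mexican hat wavelet ψ(t)=(1−t²)e^{−t²/2}, so that ψ̂(u)=√(2π) u² e^{−u²/2}, and define c_s by c_s=√(2π)(−1)^{l−1}/(2^{l−1}(l−1)!) if s=2l with l≥1, and c_s=0 otherwise. Fix b∈ℝ, b≠0, let f∈L¹(ℝ)∩L²(ℝ), and set h(u)=e^{ibu} f̂(u). Assume h(u)=O(|u|^ρ) as u→0 for some ρ>−1, and that there exist β>0 and complex coefficients b_r^± such that for every N∈ℕ, h(u)−e^{ibu}Σ_{r=0}^{N−1} b_r^+ u^{−r−β}=O(u^{−N−β}) and h(−u)−e^{−ibu}Σ_{r=0}^{N−1} b_r^− u^{−r−β}=O(u^{−N−β}) as u→+∞. Then for every n≥1 the generalized Mellin transforms M[h₊;s+1] and M[h₋;s+1] exist for s=0,…,n−1 (where h₊(u)=h(u), h₋(u)=h(−u) for u>0), the limits defining δ_n(a) below exist, and for every a>0: (W_ψf)(b,a) = (1/2π)·{ Σ_{s=0}^{n−1} c_s ( M[h₊;s+1] + (−1)^s M[h₋;s+1]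 ) a^{s+1/2} + δ_n(a) }, where δ_n(a) = a^{−1/2} lim_{ε→0+} [ ∫_0^∞ ψ̂_n(u) h(u/a) e^{−εu} du + ∫_0^∞ ψ̂_n(−u) h(−u/a) e^{−εu} du ] and ψ̂_n(u) := ψ̂(u) − Σ_{s=0}^{n−1} c_s u^s. -/
open MeasureTheory Filter Set Topology Asymptotics

/-- The Fourier transform `f̂(ω) = ∫ e^{−itω} f(t) dt`. -/
noncomputable def fourierInt (f : ℝ → ℂ) (ω : ℝ) : ℂ :=
  ∫ t : ℝ, Complex.exp (-(Complex.I * t * ω)) * f t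

/-- The wavelet transform `(W_ψ f)(b, a) = a^{−1/2} ∫ f(t) conj(ψ((t−b)/a)) dt`. -/
noncomputable def waveletTransform (ψ f : ℝ → ℂ) (b a : ℝ) : ℂ :=
  (((Real.sqrt a)⁻¹ : ℝ) : ℂ) * ∫ t : ℝ, f t * (starRingEnd ℂ) (ψ ((t - b) / a))

/-- The Mexican hat wavelet `ψ(t) = (1 − t²) e^{−t²/2}`. -/
noncomputable def mexicanHat : ℝ → ℂ :=
  fun t => (((1 - t ^ 2) * Real.exp (-t ^ 2 / 2) : ℝ) : ℂ)

/-- Its Fourier transform `ψ̂(u) = √(2π) u² e^{−u²/2}`. -/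
noncomputable def mexicanHatHat (u : ℝ) : ℂ :=
  ((Real.sqrt (2 * Real.pi) * u ^ 2 * Real.exp (-u ^ 2 / 2) : ℝ) : ℂ)

/-- The Maclaurin coefficients: `c_s = √(2π)(−1)^{l−1}/(2^{l−1}(l−1)!)` if `s = 2l`,
`l ≥ 1`, and `c_s = 0` otherwise. -/
noncomputable def mexicanHatCoeff (s : ℕ) : ℂ :=
  if s % 2 = 0 ∧ 2 ≤ s then
    ((Real.sqrt (2 * Real.pi) * (-1 : ℝ) ^ (s / 2 - 1) /
      (2 ^ (s / 2 - 1) * ((s / 2 - 1).factorial : ℝ)) : ℝ) : ℂ)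
  else 0

/-- The remainder `ψ̂_n(u) = ψ̂(u) − Σ_{s=0}^{n−1} c_s u^s`. -/
noncomputable def mexicanHatHatRem (n : ℕ) (u : ℝ) : ℂ :=
  mexicanHatHat u - ∑ s ∈ Finset.range n, mexicanHatCoeff s * (u : ℂ) ^ s

/-- Abel summability of `g` on `S`. -/
def AbelOn (S : Set ℝ) (g : ℝ → ℂ) : Prop :=
  (∀ ε : ℝ, 0 < ε → IntegrableOn (fun u => g u * ((Real.exp (-ε * u) : ℝ) : ℂ)) S) ∧
  ∃ M : ℂ, Tendsto (fun ε : ℝ => ∫ u in S, g u * ((Real.exp (-ε * u) : ℝ) : ℂ)) (𝓝[>] 0) (𝓝 M)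

lemma AbelOn.add {S : Set ℝ} {g₁ g₂ : ℝ → ℂ} (h₁ : AbelOn S g₁) (h₂ : AbelOn S g₂) :
    AbelOn S (fun u => g₁ u + g₂ u) := by
  obtain ⟨i₁, M₁, t₁⟩ := h₁
  obtain ⟨i₂, M₂, t₂⟩ := h₂
  refine ⟨fun ε hε => ?_, M₁ + M₂, ?_⟩
  · refine ((i₁ ε hε).add (i₂ ε hε)).congr (Eventually.of_forall fun u => ?_)
    simp only [Pi.add_apply]; ring
  · refine (t₁.add t₂).congr' ?_
    filter_upwards [self_mem_nhdsWithin] with ε hε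
    rw [← integral_add (i₁ ε hε) (i₂ ε hε)]
    congr 1; ext u; ring

lemma AbelOn.const_mul {S : Set ℝ} {g : ℝ → ℂ} (c : ℂ) (h : AbelOn S g) :
    AbelOn S (fun u => c * g u) := by
  obtain ⟨i, M, t⟩ := h
  refine ⟨fun ε hε => ?_, c * M, ?_⟩
  · refine ((i ε hε).const_mul c).congr (Eventually.of_forall fun u => ?_)
    simp only [mul_assoc]
  · refine (t.const_mul c).congr fun ε => ?_
    rw [← integral_const_mul]
    congr 1; ext u; ring

lemma AbelOn.sum {S : Set ℝ} {g : ℕ → ℝ → ℂ} (N : ℕ) (h : ∀ r, AbelOn S (g r)) :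
    AbelOn S (fun u => ∑ r ∈ Finset.range N, g r u) := by
  induction N with
  | zero => exact ⟨fun ε _ => by simp, 0, by simp⟩
  | succ k ih => simpa only [Finset.sum_range_succ] using ih.add (h k)

lemma AbelOn.congr {S : Set ℝ} (hS : MeasurableSet S) {g₁ g₂ : ℝ → ℂ} (h : AbelOn S g₁)
    (he : ∀ u ∈ S, g₁ u = g₂ u) : AbelOn S g₂ := by
  obtain ⟨i, M, t⟩ := h
  refine ⟨fun ε hε => ?_, M, ?_⟩
  · exact (i ε hε).congr_fun (fun u hu => by simp only [he u hu]) hS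
  · refine t.congr fun ε => ?_
    exact setIntegral_congr_fun hS (fun u hu => by simp only [he u hu])

lemma AbelOn.union {S T : Set ℝ} (hT : MeasurableSet T) (hd : Disjoint S T) {g : ℝ → ℂ}
    (h₁ : AbelOn S g) (h₂ : AbelOn T g) : AbelOn (S ∪ T) g := by
  obtain ⟨i₁, M₁, t₁⟩ := h₁
  obtain ⟨i₂, M₂, t₂⟩ := h₂
  refine ⟨fun ε hε => (i₁ ε hε).union (i₂ ε hε), M₁ + M₂, ?_⟩
  refine (t₁.add t₂).congr' ?_
  filter_upwards [self_mem_nhdsWithin] with ε hε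
  rw [setIntegral_union hd hT (i₁ ε hε) (i₂ ε hε)]

lemma norm_exp_damp_le {ε u : ℝ} (hε : 0 < ε) (hu : 0 ≤ u) :
    ‖((Real.exp (-ε * u) : ℝ) : ℂ)‖ ≤ 1 := by
  rw [Complex.norm_real, Real.norm_of_nonneg (Real.exp_pos _).le]
  apply Real.exp_le_one_iff.mpr
  nlinarith

lemma integrable_damp {S : Set ℝ} (hS : MeasurableSet S) (hS0 : S ⊆ Ici 0) {g : ℝ → ℂ}
    (hg : IntegrableOn g S) {ε : ℝ} (hε : 0 < ε) :
    IntegrableOn (fun u => g u * ((Real.exp (-ε * u) : ℝ) : ℂ)) S := by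
  refine Integrable.mul_bdd (c := 1) hg ?_ ?_
  · exact Continuous.aestronglyMeasurable (by fun_prop)
  · filter_upwards [ae_restrict_mem hS] with u hu
    exact norm_exp_damp_le hε (hS0 hu)

lemma tendsto_damp {S : Set ℝ} (hS : MeasurableSet S) (hS0 : S ⊆ Ici 0) {g : ℝ → ℂ}
    (hg : IntegrableOn g S) :
    Tendsto (fun ε : ℝ => ∫ u in S, g u * ((Real.exp (-ε * u) : ℝ) : ℂ)) (𝓝[>] 0)
      (𝓝 (∫ u in S, g u)) := by
  refine tendsto_integral_filter_of_dominated_convergence (fun u => ‖g u‖) ?_ ?_ hg.norm ?_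
  · filter_upwards [self_mem_nhdsWithin] with ε hε
    exact (integrable_damp hS hS0 hg hε).aestronglyMeasurable
  · filter_upwards [self_mem_nhdsWithin] with ε hε
    filter_upwards [ae_restrict_mem hS] with u hu
    rw [norm_mul]
    exact mul_le_of_le_one_right (norm_nonneg _) (norm_exp_damp_le hε (hS0 hu))
  · refine Eventually.of_forall fun u => ?_
    have : Continuous fun ε : ℝ => g u * ((Real.exp (-ε * u) : ℝ) : ℂ) := by fun_prop
    have h2 := (this.tendsto 0).mono_left (nhdsWithin_le_nhds (s := Ioi 0))
    simpa using h2

lemma AbelOn.of_integrable {S : Set ℝ} (hS : MeasurableSet S) (hS0 : S ⊆ Ici 0) {g : ℝ → ℂ}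
    (hg : IntegrableOn g S) : AbelOn S g :=
  ⟨fun _ hε => integrable_damp hS hS0 hg hε, _, tendsto_damp hS hS0 hg⟩

lemma integrableOn_rpow_exp (γ : ℝ) {ε : ℝ} (hε : 0 < ε) :
    IntegrableOn (fun u : ℝ => u ^ γ * Real.exp (-ε * u)) (Ioi 1) := by
  have h1 := integrableOn_rpow_mul_exp_neg_mul_rpow (p := 1) (s := max γ 0) (b := ε)
    (by have := le_max_right γ 0; linarith) one_pos hε
  have h2 : IntegrableOn (fun u : ℝ => u ^ (max γ 0) * Real.exp (-ε * u)) (Ioi 1) := by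
    simpa using h1.mono_set (Ioi_subset_Ioi zero_le_one)
  refine Integrable.mono' h2 ?_ ?_
  · refine ContinuousOn.aestronglyMeasurable ?_ measurableSet_Ioi
    refine ContinuousOn.mul ?_ (by fun_prop)
    exact ContinuousOn.rpow_const continuousOn_id
      fun x hx => Or.inl (by have : (1:ℝ) < x := hx; show x ≠ 0; linarith)
  · filter_upwards [ae_restrict_mem measurableSet_Ioi] with u hu
    have hu1 : (1:ℝ) < u := hu
    rw [Real.norm_of_nonneg (by positivity)]
    gcongr
    · exact hu1.le
    · exact le_max_left _ _

lemma integrableOn_osc (b γ : ℝ) {ε : ℝ} (hε : 0 < ε) :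
    IntegrableOn (fun u : ℝ => Complex.exp (Complex.I * b * u) * ((u ^ γ : ℝ) : ℂ) *
      ((Real.exp (-ε * u) : ℝ) : ℂ)) (Ioi 1) := by
  have h := (integrableOn_rpow_exp γ hε).ofReal (𝕜 := ℂ)
  have h2 := Integrable.bdd_mul (f := fun u : ℝ => Complex.exp (Complex.I * b * u)) (c := 1) h
    (Continuous.aestronglyMeasurable (by fun_prop))
    (Eventually.of_forall fun u => by simp [Complex.norm_exp])
  refine h2.congr (Eventually.of_forall fun u => ?_)
  simp [mul_assoc]

lemma osc_ibp (b γ : ℝ) {ε : ℝ} (hε : 0 < ε) :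
    (Complex.I * b - ε) * (∫ u in Ioi (1:ℝ), Complex.exp (Complex.I * b * u) * ((u ^ γ : ℝ) : ℂ) *
      ((Real.exp (-ε * u) : ℝ) : ℂ)) = -(Complex.exp (Complex.I * b) * Real.exp (-ε)) -
      γ * (∫ u in Ioi (1:ℝ), Complex.exp (Complex.I * b * u) * ((u ^ (γ - 1) : ℝ) : ℂ) *
      ((Real.exp (-ε * u) : ℝ) : ℂ)) := by
  have hd : ∀ x ∈ Ici (1:ℝ), HasDerivAt (fun u : ℝ => Complex.exp (Complex.I * b * u) *
      ((u ^ γ : ℝ) : ℂ) * ((Real.exp (-ε * u) : ℝ) : ℂ))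
      ((Complex.I * b - ε) * (Complex.exp (Complex.I * b * x) * ((x ^ γ : ℝ) : ℂ) *
      ((Real.exp (-ε * x) : ℝ) : ℂ)) + γ * (Complex.exp (Complex.I * b * x) *
        ((x ^ (γ - 1) : ℝ) : ℂ) * ((Real.exp (-ε * x) : ℝ) : ℂ))) x := by
    intro x hx
    have hx1 : (1:ℝ) ≤ x := hx
    have e1 : HasDerivAt (fun u : ℝ => Complex.exp (Complex.I * b * u))
        (Complex.exp (Complex.I * b * x) * (Complex.I * b)) x := by
      have : HasDerivAt (fun u : ℝ => Complex.I * b * (u : ℂ)) (Complex.I * b * 1) x :=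
        (HasDerivAt.ofReal_comp (hasDerivAt_id x)).const_mul _
      simpa using this.cexp
    have e2 : HasDerivAt (fun u : ℝ => ((u ^ γ : ℝ) : ℂ)) ((γ * x ^ (γ - 1) : ℝ) : ℂ) x :=
      HasDerivAt.ofReal_comp (Real.hasDerivAt_rpow_const (Or.inl (by linarith)))
    have e3 : HasDerivAt (fun u : ℝ => ((Real.exp (-ε * u) : ℝ) : ℂ))
        ((Real.exp (-ε * x) * (-ε) : ℝ) : ℂ) x := by
      apply HasDerivAt.ofReal_comp
      have : HasDerivAt (fun u : ℝ => -ε * u) (-ε * 1) x := (hasDerivAt_id x).const_mul _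
      simpa using this.exp
    refine HasDerivAt.congr_deriv (f := fun u : ℝ => Complex.exp (Complex.I * b * u) *
      ((u ^ γ : ℝ) : ℂ) * ((Real.exp (-ε * u) : ℝ) : ℂ)) ((e1.fun_mul e2).fun_mul e3) ?_
    push_cast
    ring
  have i0 := integrableOn_osc b γ hε
  have i1 := i0.const_mul (Complex.I * b - ε)
  have i2 := (integrableOn_osc b (γ - 1) hε).const_mul (γ : ℂ)
  have ht := tendsto_zero_of_hasDerivAt_of_integrableOn_Ioi
    (fun x hx => hd x (Ioi_subset_Ici_self hx)) (i1.add i2) i0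
  have key := integral_Ioi_of_hasDerivAt_of_tendsto' hd (i1.add i2) ht
  rw [integral_add i1 i2, integral_const_mul, integral_const_mul] at key
  rw [← sub_eq_zero] at key ⊢
  rw [← key]
  simp
  ring

lemma abelOn_osc (b : ℝ) (hb : b ≠ 0) (k : ℕ) : ∀ γ : ℝ, γ < (k : ℝ) - 1 →
    AbelOn (Ioi 1) (fun u : ℝ => Complex.exp (Complex.I * b * u) * ((u ^ γ : ℝ) : ℂ)) := by
  induction k with
  | zero =>
    intro γ hγ
    refine AbelOn.of_integrable measurableSet_Ioi
      (fun x hx => by have : (1:ℝ) < x := hx; simp only [mem_Ici]; linarith) ?_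
    have h := (integrableOn_Ioi_rpow_of_lt (a := γ) (by simpa using hγ) one_pos).ofReal (𝕜 := ℂ)
    exact Integrable.bdd_mul (f := fun u : ℝ => Complex.exp (Complex.I * b * u)) (c := 1) h
      (Continuous.aestronglyMeasurable (by fun_prop))
      (Eventually.of_forall fun u => by simp [Complex.norm_exp])
  | succ k ih =>
    intro γ hγ
    push_cast at hγ
    obtain ⟨-, M, hM⟩ := ih (γ - 1) (by linarith)
    refine ⟨fun ε hε => integrableOn_osc b γ hε, ?_⟩
    have hc : Tendsto (fun ε : ℝ => (Complex.I * b - ε : ℂ)) (𝓝[>] 0) (𝓝 (Complex.I * b)) := by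
      have : Continuous fun ε : ℝ => (Complex.I * b - ε : ℂ) := by fun_prop
      simpa using (this.tendsto 0).mono_left (nhdsWithin_le_nhds (s := Ioi 0))
    have he : Tendsto (fun ε : ℝ => -(Complex.exp (Complex.I * b) * Real.exp (-ε))) (𝓝[>] 0)
        (𝓝 (-(Complex.exp (Complex.I * b)))) := by
      have : Continuous fun ε : ℝ => -(Complex.exp (Complex.I * b) * Real.exp (-ε)) := by fun_prop
      simpa using (this.tendsto 0).mono_left (nhdsWithin_le_nhds (s := Ioi 0))
    have hb' : Complex.I * b ≠ 0 := by simp [hb]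
    refine ⟨_, ((he.sub (hM.const_mul (γ : ℂ))).div hc hb').congr' ?_⟩
    filter_upwards [self_mem_nhdsWithin] with ε hε
    have hne : (Complex.I * b - ε : ℂ) ≠ 0 := by
      intro h0
      have := congrArg Complex.im h0
      simp at this
      exact hb this
    simp only [Pi.div_apply]
    rw [← osc_ibp b γ hε]
    field_simp

/-- Main existence result for generalized Mellin transforms. -/
lemma abelOn_mellin (b : ℝ) (hb : b ≠ 0) (h : ℝ → ℂ) (hc : Continuous h) (β : ℝ) (bp : ℕ → ℂ)
    (hβ : 0 < β)
    (hhp : ∀ N : ℕ,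
      (fun u : ℝ => h u - Complex.exp (Complex.I * b * u) *
          ∑ r ∈ Finset.range N, bp r * ((u ^ (-(r : ℝ) - β) : ℝ) : ℂ))
        =O[atTop] fun u => u ^ (-(N : ℝ) - β)) (s : ℕ) :
    AbelOn (Ioi 0) (fun u : ℝ => ((u ^ s : ℝ) : ℂ) * h u) := by
  rw [← Ioc_union_Ioi_eq_Ioi (zero_le_one' ℝ)]
  refine AbelOn.union measurableSet_Ioi Ioc_disjoint_Ioi_same ?_ ?_
  · refine AbelOn.of_integrable measurableSet_Ioc (fun x hx => hx.1.le) ?_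
    have : Continuous fun u : ℝ => ((u ^ s : ℝ) : ℂ) * h u := by fun_prop
    exact this.integrableOn_Ioc
  · set R : ℝ → ℂ := fun u => h u - Complex.exp (Complex.I * b * u) *
          ∑ r ∈ Finset.range (s + 1), bp r * ((u ^ (-(r : ℝ) - β) : ℝ) : ℂ) with hR
    have hcr : ∀ γ : ℝ, ContinuousOn (fun u : ℝ => ((u ^ γ : ℝ) : ℂ)) (Ici 1) := fun γ =>
      Complex.continuous_ofReal.comp_continuousOn (ContinuousOn.rpow_const continuousOn_id
        fun x hx => Or.inl (by have : (1:ℝ) ≤ x := hx; show x ≠ 0; linarith))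
    have hRi : IntegrableOn (fun u : ℝ => ((u ^ s : ℝ) : ℂ) * R u) (Ioi 1) := by
      have hco : ContinuousOn (fun u : ℝ => ((u ^ s : ℝ) : ℂ) * R u) (Ici 1) := by
        refine ContinuousOn.mul (by fun_prop) (ContinuousOn.sub (by fun_prop) ?_)
        refine ContinuousOn.mul (by fun_prop) ?_
        exact continuousOn_finsetSum _ fun r _ => continuousOn_const.mul (hcr _)
      have hl : LocallyIntegrableOn (fun u : ℝ => ((u ^ s : ℝ) : ℂ) * R u) (Ici 1) :=
        hco.locallyIntegrableOn measurableSet_Ici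
      refine (hl.integrableOn_of_isBigO_atTop (g := fun u : ℝ => u ^ (-1 - β)) ?_ ?_).mono_set
        Ioi_subset_Ici_self
      · have o1 : (fun u : ℝ => ((u ^ s : ℝ) : ℂ)) =O[atTop] fun u : ℝ => u ^ s :=
          IsBigO.of_norm_left (by simpa using (isBigO_refl (fun u : ℝ => u ^ s) atTop).norm_left)
        refine (o1.mul (hhp (s + 1))).trans_eventuallyEq ?_
        filter_upwards [eventually_gt_atTop 0] with u hu
        rw [← Real.rpow_natCast, ← Real.rpow_add hu]
        congr 1; push_cast; ring
      · exact ⟨Ioi 1, Ioi_mem_atTop 1, integrableOn_Ioi_rpow_of_lt (by linarith) one_pos⟩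
    have hsum : AbelOn (Ioi 1) (fun u : ℝ => ∑ r ∈ Finset.range (s + 1), bp r *
        (Complex.exp (Complex.I * b * u) * ((u ^ ((s : ℝ) - r - β) : ℝ) : ℂ))) := by
      refine AbelOn.sum _ fun r => AbelOn.const_mul _ ?_
      refine abelOn_osc b hb (s + 1) _ ?_
      push_cast
      have : (0:ℝ) ≤ r := Nat.cast_nonneg r
      linarith
    refine ((AbelOn.of_integrable measurableSet_Ioi
      (fun x hx => by have : (1:ℝ) < x := hx; simp only [mem_Ici]; linarith) hRi).add hsum).congr
      measurableSet_Ioi ?_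
    intro u hu
    have hu0 : (0:ℝ) < u := by have : (1:ℝ) < u := hu; linarith
    simp only [hR, mul_sub, Finset.mul_sum]
    rw [sub_add, sub_eq_self, sub_eq_zero]
    refine Finset.sum_congr rfl fun r _ => ?_
    rw [show (s : ℝ) - r - β = s + (-r - β) by ring, Real.rpow_add hu0, Real.rpow_natCast]
    push_cast; ring

lemma integrable_gauss_pow (k : ℕ) : Integrable (fun t : ℝ => t ^ k * Real.exp (-t ^ 2 / 2)) := by
  have h := integrable_rpow_mul_exp_neg_mul_sq (b := 1 / 2) (by norm_num) (s := k)
    (by have : (0:ℝ) ≤ k := Nat.cast_nonneg k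
        linarith)
  refine h.congr (Eventually.of_forall fun t => ?_)
  simp only [Real.rpow_natCast]
  congr 2; ring

lemma integrable_gauss_osc (k : ℕ) (w : ℝ) :
    Integrable (fun t : ℝ => (t : ℂ) ^ k *
      (Complex.exp (-(Complex.I * t * w)) * ((Real.exp (-t ^ 2 / 2) : ℝ) : ℂ))) := by
  have h2 := Integrable.bdd_mul (f := fun t : ℝ => Complex.exp (-(Complex.I * t * w))) (c := 1)
    ((integrable_gauss_pow k).ofReal (𝕜 := ℂ))
    (Continuous.aestronglyMeasurable (by fun_prop))
    (Eventually.of_forall fun u => by simp [Complex.norm_exp])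
  refine h2.congr (Eventually.of_forall fun u => ?_)
  simp
  ring

lemma gauss_zero (w : ℝ) :
    ∫ t : ℝ, Complex.exp (-(Complex.I * t * w)) * ((Real.exp (-t ^ 2 / 2) : ℝ) : ℂ) =
      ((Real.sqrt (2 * Real.pi) * Real.exp (-w ^ 2 / 2) : ℝ) : ℂ) := by
  have h := fourierIntegral_gaussian (b := 1 / 2) (by norm_num) (-(w : ℂ))
  have e1 : ((Real.pi : ℂ) / (1 / 2)) ^ (1 / 2 : ℂ) = ((Real.sqrt (2 * Real.pi) : ℝ) : ℂ) := by
    rw [Real.sqrt_eq_rpow, Complex.ofReal_cpow (by positivity)]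
    push_cast
    congr 1
    ring
  rw [e1] at h
  calc _ = ∫ x : ℝ, Complex.exp (Complex.I * -(w : ℂ) * x) * Complex.exp (-(1 / 2) * x ^ 2) := by
        congr 1; ext t
        push_cast
        congr 2 <;> ring
    _ = _ := h
    _ = _ := by
        push_cast
        congr 2; ring

lemma gauss_two (w : ℝ) :
    ∫ t : ℝ, (t : ℂ) ^ 2 *
      (Complex.exp (-(Complex.I * t * w)) * ((Real.exp (-t ^ 2 / 2) : ℝ) : ℂ)) =
      (1 - (w : ℂ) ^ 2) * ((Real.sqrt (2 * Real.pi) * Real.exp (-w ^ 2 / 2) : ℝ) : ℂ) := by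
  have i0 := integrable_gauss_osc 0 w
  have i1 := integrable_gauss_osc 1 w
  have i2 := integrable_gauss_osc 2 w
  simp only [pow_zero, one_mul, pow_one] at i0 i1
  have hd : ∀ x : ℝ, HasDerivAt (fun t : ℝ => (t : ℂ) * (Complex.exp (-(Complex.I * t * w)) *
      ((Real.exp (-t ^ 2 / 2) : ℝ) : ℂ)) + (-(Complex.I * w)) * (Complex.exp (-(Complex.I * t * w)) *
      ((Real.exp (-t ^ 2 / 2) : ℝ) : ℂ)))
      ((1 - (w : ℂ) ^ 2) * (Complex.exp (-(Complex.I * x * w)) *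
      ((Real.exp (-x ^ 2 / 2) : ℝ) : ℂ)) - (x : ℂ) ^ 2 * (Complex.exp (-(Complex.I * x * w)) *
      ((Real.exp (-x ^ 2 / 2) : ℝ) : ℂ))) x := by
    intro x
    have e0 : HasDerivAt (fun t : ℝ => (t : ℂ)) 1 x := HasDerivAt.ofReal_comp (hasDerivAt_id x)
    have e1 : HasDerivAt (fun t : ℝ => Complex.exp (-(Complex.I * t * w)))
        (Complex.exp (-(Complex.I * x * w)) * (-(Complex.I * 1 * w))) x :=
      (((e0.const_mul Complex.I).mul_const (w : ℂ)).neg).cexp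
    have e2 : HasDerivAt (fun t : ℝ => ((Real.exp (-t ^ 2 / 2) : ℝ) : ℂ))
        ((Real.exp (-x ^ 2 / 2) * (-x) : ℝ) : ℂ) x := by
      apply HasDerivAt.ofReal_comp
      have : HasDerivAt (fun t : ℝ => -t ^ 2 / 2) (-x) x := by
        refine ((((hasDerivAt_id' x).fun_pow 2).fun_neg).div_const 2).congr_deriv ?_
        norm_num
        ring
      exact this.exp
    have e3 := e1.fun_mul e2
    refine ((e0.fun_mul e3).fun_add (e3.const_mul (-(Complex.I * w)))).congr_deriv ?_
    push_cast
    linear_combination ((w : ℂ) ^ 2 * (Complex.exp (-(Complex.I * x * w)) *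
      (Complex.exp (-x ^ 2 / 2)))) * Complex.I_sq
  have key := integral_eq_zero_of_hasDerivAt_of_integrable hd
    ((i0.const_mul _).sub i2) (i1.add (i0.const_mul _))
  rw [integral_sub (i0.const_mul _) i2, integral_const_mul, gauss_zero] at key
  exact (sub_eq_zero.mp key).symm

lemma fourier_mexicanHat (u : ℝ) : fourierInt mexicanHat u = mexicanHatHat u := by
  have i0 := integrable_gauss_osc 0 u
  have i2 := integrable_gauss_osc 2 u
  simp only [pow_zero, one_mul] at i0
  have : fourierInt mexicanHat u = ∫ t : ℝ,
      (Complex.exp (-(Complex.I * t * u)) * ((Real.exp (-t ^ 2 / 2) : ℝ) : ℂ) -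
      (t : ℂ) ^ 2 * (Complex.exp (-(Complex.I * t * u)) * ((Real.exp (-t ^ 2 / 2) : ℝ) : ℂ))) := by
    unfold fourierInt mexicanHat
    congr 1; ext t
    push_cast
    ring
  rw [this, integral_sub i0 i2, gauss_zero, gauss_two, mexicanHatHat]
  push_cast
  ring

lemma fourier_mexicanHatHat (x : ℝ) :
    ∫ u : ℝ, Complex.exp (-(Complex.I * u * x)) * mexicanHatHat u =
      ((2 * Real.pi : ℝ) : ℂ) * mexicanHat x := by
  have h := gauss_two x
  have hs : ((Real.sqrt (2 * Real.pi) : ℝ) : ℂ) * ((Real.sqrt (2 * Real.pi) : ℝ) : ℂ)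
      = ((2 * Real.pi : ℝ) : ℂ) := by
    rw [← Complex.ofReal_mul, Real.mul_self_sqrt (by positivity)]
  calc _ = ∫ u : ℝ, ((Real.sqrt (2 * Real.pi) : ℝ) : ℂ) * ((u : ℂ) ^ 2 *
      (Complex.exp (-(Complex.I * u * x)) * ((Real.exp (-u ^ 2 / 2) : ℝ) : ℂ))) := by
        congr 1; ext u
        unfold mexicanHatHat
        push_cast
        ring
    _ = _ := by
        rw [integral_const_mul, h, ← hs]
        unfold mexicanHat
        push_cast
        ring

lemma integrable_mexicanHatHat : Integrable mexicanHatHat := by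
  refine (((integrable_gauss_pow 2).const_mul (Real.sqrt (2 * Real.pi))).ofReal (𝕜 := ℂ)).congr
    (Eventually.of_forall fun u => ?_)
  simp [mexicanHatHat, mul_assoc]

lemma continuous_mexicanHatHat : Continuous mexicanHatHat := by
  unfold mexicanHatHat
  fun_prop

lemma norm_fourier_kernel (t u : ℝ) : ‖Complex.exp (-(Complex.I * t * u))‖ = 1 := by
  simp [Complex.norm_exp]

lemma continuous_fourierInt {f : ℝ → ℂ} (hf : Integrable f) : Continuous (fourierInt f) := by
  unfold fourierInt
  refine continuous_of_dominated (bound := fun t => ‖f t‖) (fun u => ?_) (fun u => ?_) hf.norm ?_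
  · exact (Continuous.aestronglyMeasurable (by fun_prop)).mul hf.aestronglyMeasurable
  · refine Eventually.of_forall fun t => ?_
    rw [norm_mul, norm_fourier_kernel, one_mul]
  · exact Eventually.of_forall fun t => by fun_prop

lemma norm_fourierInt_le {f : ℝ → ℂ} (u : ℝ) : ‖fourierInt f u‖ ≤ ∫ t, ‖f t‖ := by
  unfold fourierInt
  refine (norm_integral_le_integral_norm _).trans (le_of_eq ?_)
  congr 1; ext t
  rw [norm_mul, norm_fourier_kernel, one_mul]

lemma wavelet_parseval {f : ℝ → ℂ} (hf : Integrable f) (b a : ℝ) :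
    waveletTransform mexicanHat f b a = (((2 * Real.pi)⁻¹ : ℝ) : ℂ) * ((((Real.sqrt a)⁻¹ : ℝ) : ℂ) *
      ∫ u : ℝ, mexicanHatHat u *
        (Complex.exp (Complex.I * b * (u / a : ℝ)) * fourierInt f (u / a))) := by
  have hpi : ((2 * Real.pi : ℝ) : ℂ) ≠ 0 := by
    exact_mod_cast (by positivity : (2 * Real.pi : ℝ) ≠ 0)
  have hI : Integrable (Function.uncurry fun t u : ℝ =>
      Complex.exp (-(Complex.I * u * ((t - b) / a : ℝ))) * (f t * mexicanHatHat u))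
      (volume.prod volume) := by
    refine Integrable.bdd_mul (c := 1)
      (f := fun p : ℝ × ℝ => Complex.exp (-(Complex.I * p.2 * ((p.1 - b) / a : ℝ))))
      (hf.mul_prod integrable_mexicanHatHat) ?_ ?_
    · exact Continuous.aestronglyMeasurable (by fun_prop)
    · exact Eventually.of_forall fun p => (norm_fourier_kernel _ _).le
  have hsw := integral_integral_swap hI
  have hl : ∀ t : ℝ, ∫ u : ℝ, Complex.exp (-(Complex.I * u * ((t - b) / a : ℝ))) *
      (f t * mexicanHatHat u) =
      ((2 * Real.pi : ℝ) : ℂ) * (f t * (starRingEnd ℂ) (mexicanHat ((t - b) / a))) := by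
    intro t
    have hconj : (starRingEnd ℂ) (mexicanHat ((t - b) / a)) = mexicanHat ((t - b) / a) := by
      unfold mexicanHat
      exact Complex.conj_ofReal _
    rw [hconj, mul_left_comm, ← fourier_mexicanHatHat, ← integral_const_mul]
    congr 1; ext u; ring
  have hr : ∀ u : ℝ, ∫ t : ℝ, Complex.exp (-(Complex.I * u * ((t - b) / a : ℝ))) *
      (f t * mexicanHatHat u) = mexicanHatHat u *
        (Complex.exp (Complex.I * b * (u / a : ℝ)) * fourierInt f (u / a)) := by
    intro u
    unfold fourierInt
    rw [← mul_assoc, ← integral_const_mul]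
    congr 1; ext t
    have : Complex.exp (-(Complex.I * u * ((t - b) / a : ℝ))) =
        Complex.exp (Complex.I * b * (u / a : ℝ)) * Complex.exp (-(Complex.I * t * (u / a : ℝ))) := by
      rw [← Complex.exp_add]
      congr 1
      push_cast
      ring
    rw [this]; ring
  simp only [hl, hr] at hsw
  rw [integral_const_mul] at hsw
  rw [← hsw]
  unfold waveletTransform
  rw [Complex.ofReal_inv (2 * Real.pi)]
  field_simp

lemma damp_scale {g : ℝ → ℂ} {M : ℂ} (s : ℕ)
    (ht : Tendsto (fun ε : ℝ => ∫ u in Ioi (0 : ℝ),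
      ((u ^ s : ℝ) : ℂ) * g u * ((Real.exp (-ε * u) : ℝ) : ℂ)) (𝓝[>] 0) (𝓝 M))
    {a : ℝ} (ha : 0 < a) :
    Tendsto (fun ε : ℝ => ∫ u in Ioi (0 : ℝ),
      ((u ^ s : ℝ) : ℂ) * g (u / a) * ((Real.exp (-ε * u) : ℝ) : ℂ)) (𝓝[>] 0)
      (𝓝 (((a ^ (s + 1) : ℝ) : ℂ) * M)) := by
  have hsc : Tendsto (fun ε : ℝ => ε * a) (𝓝[>] 0) (𝓝[>] 0) := by
    refine tendsto_nhdsWithin_iff.mpr ⟨?_, ?_⟩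
    · have : Continuous fun ε : ℝ => ε * a := by fun_prop
      simpa using (this.tendsto 0).mono_left (nhdsWithin_le_nhds (s := Ioi 0))
    · filter_upwards [self_mem_nhdsWithin] with ε hε
      exact mul_pos hε ha
  refine ((ht.comp hsc).const_mul ((a ^ (s + 1) : ℝ) : ℂ)).congr fun ε => ?_
  have h := integral_comp_mul_left_Ioi' (fun u : ℝ =>
    ((u ^ s : ℝ) : ℂ) * g (u / a) * ((Real.exp (-ε * u) : ℝ) : ℂ)) 0 ha
  rw [mul_zero] at h
  rw [← h]
  simp only [Function.comp]
  rw [← integral_const_mul, Complex.real_smul, ← integral_const_mul]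
  congr 1; ext u
  rw [mul_div_cancel_left₀ u ha.ne', show -(ε * a) * u = -ε * (a * u) by ring]
  push_cast
  ring

lemma damp_integrable_scale {g : ℝ → ℂ} (s : ℕ)
    (hi : ∀ ε : ℝ, 0 < ε → IntegrableOn (fun u : ℝ =>
      ((u ^ s : ℝ) : ℂ) * g u * ((Real.exp (-ε * u) : ℝ) : ℂ)) (Ioi 0))
    {a : ℝ} (ha : 0 < a) {ε : ℝ} (hε : 0 < ε) :
    IntegrableOn (fun u : ℝ =>
      ((u ^ s : ℝ) : ℂ) * g (u / a) * ((Real.exp (-ε * u) : ℝ) : ℂ)) (Ioi 0) := by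
  have h := integrableOn_Ioi_comp_mul_left_iff (fun u : ℝ =>
    ((u ^ s : ℝ) : ℂ) * g (u / a) * ((Real.exp (-ε * u) : ℝ) : ℂ)) 0 ha
  rw [mul_zero] at h
  refine h.mp ?_
  refine ((hi (ε * a) (mul_pos hε ha)).const_mul ((a ^ s : ℝ) : ℂ)).congr
    (Eventually.of_forall fun u => ?_)
  simp only
  rw [mul_div_cancel_left₀ u ha.ne', show -(ε * a) * u = -ε * (a * u) by ring]
  push_cast
  ring

/-- The one-sided limit. -/
lemma side_limit (g : ℝ → ℂ) (w : ℝ → ℂ) (c : ℕ → ℂ) (n : ℕ) (M : ℕ → ℂ) {a : ℝ} (ha : 0 < a)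
    (hw : IntegrableOn (fun u => w u * g (u / a)) (Ioi 0))
    (hi : ∀ s, ∀ ε : ℝ, 0 < ε → IntegrableOn (fun u : ℝ =>
      ((u ^ s : ℝ) : ℂ) * g u * ((Real.exp (-ε * u) : ℝ) : ℂ)) (Ioi 0))
    (ht : ∀ s, Tendsto (fun ε : ℝ => ∫ u in Ioi (0 : ℝ),
      ((u ^ s : ℝ) : ℂ) * g u * ((Real.exp (-ε * u) : ℝ) : ℂ)) (𝓝[>] 0) (𝓝 (M s))) :
    Tendsto (fun ε : ℝ => ∫ u in Ioi (0 : ℝ),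
      (w u - ∑ s ∈ Finset.range n, c s * ((u ^ s : ℝ) : ℂ)) * g (u / a) *
        ((Real.exp (-ε * u) : ℝ) : ℂ)) (𝓝[>] 0)
      (𝓝 ((∫ u in Ioi (0 : ℝ), w u * g (u / a)) -
        ∑ s ∈ Finset.range n, c s * (((a ^ (s + 1) : ℝ) : ℂ) * M s))) := by
  have h1 := tendsto_damp measurableSet_Ioi Ioi_subset_Ici_self hw
  have h2 := tendsto_finsetSum (Finset.range n) fun s _ =>
    (damp_scale s (ht s) ha).const_mul (c s)
  refine (h1.sub h2).congr' ?_
  filter_upwards [self_mem_nhdsWithin] with ε hε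
  have i1 := integrable_damp measurableSet_Ioi Ioi_subset_Ici_self hw hε
  have i2 : ∀ s ∈ Finset.range n, Integrable (fun u : ℝ => c s *
      (((u ^ s : ℝ) : ℂ) * g (u / a) * ((Real.exp (-ε * u) : ℝ) : ℂ)))
      (volume.restrict (Ioi 0)) := fun s _ =>
    (damp_integrable_scale s (hi s) ha hε).const_mul (c s)
  simp only [← integral_const_mul]
  rw [← integral_finsetSum _ i2, ← integral_sub i1 (integrable_finsetSum _ i2)]
  congr 1; ext u
  rw [sub_mul, sub_mul, Finset.sum_mul, Finset.sum_mul]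
  congr 1
  refine Finset.sum_congr rfl fun s _ => ?_
  ring

/-- **Asymptotic expansion of the Mexican hat wavelet transform for small `a`.**
With `ψ` the Mexican hat wavelet (so `ψ̂(u) = √(2π) u² e^{−u²/2}`), `b ≠ 0`,
`f ∈ L¹ ∩ L²`, `h(u) = e^{ibu} f̂(u)` with `h(u) = O(|u|^ρ)` (`ρ > −1`) as `u → 0`
and the stated expansions as `u → ±∞`, then for every `n ≥ 1` the generalized Mellin
transforms `M[h₊; s+1]`, `M[h₋; s+1]` exist for `s < n`, the limit defining `δ_n(a)`
exists, and `(W_ψ f)(b,a) = (1/2π){Σ_{s<n} c_s (M[h₊;s+1] + (−1)^s M[h₋;s+1]) a^{s+1/2}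
+ δ_n(a)}` where `δ_n(a) = a^{−1/2}·(limit)`. -/
theorem mexicanHat_wavelet_asymptotic (b : ℝ) (hb : b ≠ 0)
    (f : ℝ → ℂ) (hf1 : Integrable f) (hf2 : MemLp f 2 volume)
    (h : ℝ → ℂ) (hdef : ∀ u : ℝ, h u = Complex.exp (Complex.I * b * u) * fourierInt f u)
    (ρ : ℝ) (hρ : -1 < ρ)
    (hh0 : h =O[𝓝[≠] (0 : ℝ)] fun u => |u| ^ ρ)
    (β : ℝ) (hβ : 0 < β) (bp bm : ℕ → ℂ)
    (hhp : ∀ N : ℕ,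
      (fun u : ℝ => h u - Complex.exp (Complex.I * b * u) *
          ∑ r ∈ Finset.range N, bp r * ((u ^ (-(r : ℝ) - β) : ℝ) : ℂ))
        =O[atTop] fun u => u ^ (-(N : ℝ) - β))
    (hhm : ∀ N : ℕ,
      (fun u : ℝ => h (-u) - Complex.exp (-(Complex.I * b * u)) *
          ∑ r ∈ Finset.range N, bm r * ((u ^ (-(r : ℝ) - β) : ℝ) : ℂ))
        =O[atTop] fun u => u ^ (-(N : ℝ) - β)) :
    (∀ u : ℝ, fourierInt mexicanHat u = mexicanHatHat u)
    ∧ ∀ n : ℕ, 1 ≤ n →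
      ∃ Mp Mm : ℕ → ℂ,
        (∀ s : ℕ, s < n →
          Tendsto (fun ε : ℝ => ∫ u in Ioi (0 : ℝ),
              ((u ^ s : ℝ) : ℂ) * h u * ((Real.exp (-ε * u) : ℝ) : ℂ))
            (𝓝[>] 0) (𝓝 (Mp s))
          ∧ Tendsto (fun ε : ℝ => ∫ u in Ioi (0 : ℝ),
              ((u ^ s : ℝ) : ℂ) * h (-u) * ((Real.exp (-ε * u) : ℝ) : ℂ))
            (𝓝[>] 0) (𝓝 (Mm s)))
        ∧ ∀ a : ℝ, 0 < a → ∃ L : ℂ,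
            Tendsto (fun ε : ℝ =>
                (∫ u in Ioi (0 : ℝ),
                  mexicanHatHatRem n u * h (u / a) * ((Real.exp (-ε * u) : ℝ) : ℂ))
                + ∫ u in Ioi (0 : ℝ),
                  mexicanHatHatRem n (-u) * h (-u / a) * ((Real.exp (-ε * u) : ℝ) : ℂ))
              (𝓝[>] 0) (𝓝 L)
            ∧ waveletTransform mexicanHat f b a
              = (((2 * Real.pi)⁻¹ : ℝ) : ℂ) *
                ((∑ s ∈ Finset.range n, mexicanHatCoeff s * (Mp s + (-1 : ℂ) ^ s * Mm s) *
                    ((a ^ ((s : ℝ) + 1 / 2) : ℝ) : ℂ))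
                  + (((Real.sqrt a)⁻¹ : ℝ) : ℂ) * L) := by
  refine ⟨fourier_mexicanHat, fun n _ => ?_⟩
  have hcont : Continuous h := by
    have : h = fun u : ℝ => Complex.exp (Complex.I * b * u) * fourierInt f u := funext hdef
    rw [this]
    exact Continuous.mul (by fun_prop) (continuous_fourierInt hf1)
  have hbd : ∀ u, ‖h u‖ ≤ ∫ t, ‖f t‖ := fun u => by
    rw [hdef, norm_mul]
    have : ‖Complex.exp (Complex.I * b * u)‖ = 1 := by simp [Complex.norm_exp]
    rw [this, one_mul]
    exact norm_fourierInt_le u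
  have hp := abelOn_mellin b hb h hcont β bp hβ hhp
  have hm := abelOn_mellin (-b) (neg_ne_zero.mpr hb) (fun u => h (-u)) (by fun_prop) β bm hβ
    (by simpa using hhm)
  choose ip Mp tp using hp
  choose im Mm tm using hm
  refine ⟨Mp, Mm, fun s _ => ⟨tp s, tm s⟩, fun a ha => ?_⟩
  have hK : Integrable (fun u : ℝ => mexicanHatHat u * h (u / a)) :=
    integrable_mexicanHatHat.mul_bdd (c := ∫ t, ‖f t‖)
      (Continuous.aestronglyMeasurable (by fun_prop)) (Eventually.of_forall fun u => hbd _)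
  have lp := side_limit h mexicanHatHat mexicanHatCoeff n Mp ha hK.integrableOn ip tp
  have lm := side_limit (fun u => h (-u)) (fun u => mexicanHatHat (-u))
    (fun s => mexicanHatCoeff s * (-1) ^ s) n Mm ha
    (by simpa [neg_div] using hK.comp_neg.integrableOn) im tm
  refine ⟨_, (lp.add lm).congr fun ε => ?_, ?_⟩
  · congr 1
    · simp [mexicanHatHatRem]
    · congr 1; ext u
      simp only [mexicanHatHatRem, neg_div]
      congr 3
      refine Finset.sum_congr rfl fun s _ => ?_
      push_cast
      rw [neg_pow (u : ℂ) s]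
      ring
  · have hsplit : (∫ u in Ioi (0 : ℝ), mexicanHatHat u * h (u / a)) +
        (∫ u in Ioi (0 : ℝ), mexicanHatHat (-u) * h (-(u / a))) =
        ∫ u : ℝ, mexicanHatHat u * h (u / a) := by
      have h1 := integral_comp_neg_Ioi 0 (fun u : ℝ => mexicanHatHat u * h (u / a))
      simp only [neg_div, neg_zero] at h1
      rw [h1, add_comm]
      exact intervalIntegral.integral_Iic_add_Ioi hK.integrableOn hK.integrableOn
    rw [wavelet_parseval hf1 b a]
    simp only [← hdef]
    rw [← hsplit]
    congr 1
    have hsq : ∀ s : ℕ, ((a ^ ((s : ℝ) + 1 / 2) : ℝ) : ℂ) =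
        (((Real.sqrt a)⁻¹ : ℝ) : ℂ) * ((a ^ (s + 1) : ℝ) : ℂ) := fun s => by
      rw [← Complex.ofReal_mul]
      congr 1
      rw [Real.sqrt_eq_rpow, ← Real.rpow_neg ha.le, ← Real.rpow_natCast, ← Real.rpow_add ha]
      congr 1; push_cast; ring
    have hsum : (∑ s ∈ Finset.range n, mexicanHatCoeff s * (Mp s + (-1 : ℂ) ^ s * Mm s) *
        ((a ^ ((s : ℝ) + 1 / 2) : ℝ) : ℂ)) = (((Real.sqrt a)⁻¹ : ℝ) : ℂ) *
        ((∑ s ∈ Finset.range n, mexicanHatCoeff s * (((a ^ (s + 1) : ℝ) : ℂ) * Mp s)) +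
        ∑ s ∈ Finset.range n, mexicanHatCoeff s * (-1) ^ s * (((a ^ (s + 1) : ℝ) : ℂ) * Mm s)) := by
      rw [← Finset.sum_add_distrib, Finset.mul_sum]
      refine Finset.sum_congr rfl fun s _ => ?_
      rw [hsq]; ring
    rw [hsum]
    ring
end

section
/- Let b∈ℝ, b≠0, let β>0, and let z∈ℂ with Re z < β+1. Let h:(0,∞)→ℂ be continuous with h(u)=O(u^ρ) as u→0+ for some ρ with ρ + Re z > 0, and suppose that for u≥1 one can write h(u)=e^{ibu} φ(u) where φ is continuously differentiable on [1,∞) with φ(u)=O(u^{−β}) and φ′(u)=O(u^{−β−1}) as u→+∞. Then the generalized Mellin transform of h at z exists; that is, the limit lim_{ε→0+} ∫_0^∞ u^{z−1} h(u) e^{−εu} du exists in ℂ. -/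
open MeasureTheory Filter Set Topology Asymptotics

lemma abel_tendsto (S : Set ℝ) (hS : MeasurableSet S) (hS0 : S ⊆ Ioi 0) (f : ℝ → ℂ)
    (hf : IntegrableOn f S) :
    (∀ ε : ℝ, 0 < ε → IntegrableOn (fun u : ℝ => f u * ((Real.exp (-ε * u) : ℝ) : ℂ)) S) ∧
    Tendsto (fun ε : ℝ => ∫ u in S, f u * ((Real.exp (-ε * u) : ℝ) : ℂ)) (𝓝[>] 0)
      (𝓝 (∫ u in S, f u)) := by
  have hm : ∀ ε : ℝ, AEStronglyMeasurable (fun u : ℝ => ((Real.exp (-ε * u) : ℝ) : ℂ))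
      (volume.restrict S) := fun ε => by
    apply Continuous.aestronglyMeasurable; fun_prop
  have hb : ∀ ε : ℝ, 0 < ε → ∀ u ∈ S, ‖((Real.exp (-ε * u) : ℝ) : ℂ)‖ ≤ 1 := by
    intro ε hε u hu
    have hu0 : 0 < u := hS0 hu
    rw [Complex.norm_real, Real.norm_eq_abs, abs_of_pos (Real.exp_pos _), Real.exp_le_one_iff]
    nlinarith
  refine ⟨fun ε hε => ?_, ?_⟩
  · exact Integrable.mul_bdd (c := 1) hf (hm ε) ((ae_restrict_iff' hS).2 (ae_of_all _ (hb ε hε)))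
  · refine tendsto_integral_filter_of_dominated_convergence (fun u => ‖f u‖) ?_ ?_ hf.norm ?_
    · exact Eventually.of_forall fun ε => hf.aestronglyMeasurable.mul (hm ε)
    · filter_upwards [self_mem_nhdsWithin] with ε hε
      refine (ae_restrict_iff' hS).2 (ae_of_all _ fun u hu => ?_)
      rw [norm_mul]
      exact mul_le_of_le_one_right (norm_nonneg _) (hb ε hε u hu)
    · refine ae_of_all _ fun u => ?_
      have : Continuous (fun ε : ℝ => f u * ((Real.exp (-ε * u) : ℝ) : ℂ)) := by fun_prop
      have h2 := this.tendsto 0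
      simp only [neg_zero, zero_mul, Real.exp_zero, Complex.ofReal_one, mul_one] at h2
      exact h2.mono_left nhdsWithin_le_nhds

lemma abel_tail (b : ℝ) (hb : b ≠ 0) (A : ℝ) (hA : 0 < A) (g g' : ℝ → ℂ) (C : ℝ)
    (hd : ∀ x ∈ Ici A, HasDerivAt g (g' x) x) (hg' : IntegrableOn g' (Ioi A))
    (hC : ∀ x ∈ Ioi A, ‖g x‖ ≤ C) :
    (∀ ε : ℝ, 0 < ε → IntegrableOn (fun u : ℝ => (g u * Complex.exp (Complex.I * b * u)) *
      ((Real.exp (-ε * u) : ℝ) : ℂ)) (Ioi A)) ∧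
    ∃ L : ℂ, Tendsto (fun ε : ℝ => ∫ u in Ioi A, (g u * Complex.exp (Complex.I * b * u)) *
      ((Real.exp (-ε * u) : ℝ) : ℂ)) (𝓝[>] 0) (𝓝 L) := by
  have hsub : Ioi A ⊆ Ioi (0:ℝ) := Ioi_subset_Ioi hA.le
  have hgc : ContinuousOn g (Ioi A) := fun x hx =>
    (hd x (mem_Ici.2 <| le_of_lt (mem_Ioi.1 hx))).continuousAt.continuousWithinAt
  have hgm : AEStronglyMeasurable g (volume.restrict (Ioi A)) :=
    hgc.aestronglyMeasurable measurableSet_Ioi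
  have hn : ∀ u : ℝ, ‖Complex.exp (Complex.I * b * u)‖ = 1 := fun u => by
    rw [Complex.norm_exp]; simp
  have hem : AEStronglyMeasurable (fun u : ℝ => Complex.exp (Complex.I * b * u))
      (volume.restrict (Ioi A)) := by
    apply Continuous.aestronglyMeasurable; fun_prop
  have hint : ∀ ε : ℝ, 0 < ε → IntegrableOn (fun u : ℝ => (g u *
      Complex.exp (Complex.I * b * u)) * ((Real.exp (-ε * u) : ℝ) : ℂ)) (Ioi A) := by
    intro ε hε
    refine Integrable.bdd_mul (c := C) ?_ (hgm.mul hem) ?_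
    · exact (exp_neg_integrableOn_Ioi A hε).ofReal
    · refine (ae_restrict_iff' measurableSet_Ioi).2 (ae_of_all _ fun u hu => ?_)
      rw [norm_mul, hn, mul_one]; exact hC u hu
  refine ⟨hint, ?_⟩
  have hg'e : IntegrableOn (fun u : ℝ => g' u * Complex.exp (Complex.I * b * u)) (Ioi A) :=
    Integrable.mul_bdd (c := 1) hg' hem (ae_of_all _ fun u => (hn u).le)
  obtain ⟨hi2, ht2⟩ := abel_tendsto (Ioi A) measurableSet_Ioi hsub _ hg'e
  have hne : ∀ ε : ℝ, (Complex.I * b - ε : ℂ) ≠ 0 := fun ε h0 => by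
    have := congrArg Complex.im h0
    simp at this
    exact hb this
  have key : ∀ ε : ℝ, 0 < ε → ∫ u in Ioi A, (g u * Complex.exp (Complex.I * b * u)) *
      ((Real.exp (-ε * u) : ℝ) : ℂ) =
      (Complex.I * b - ε : ℂ)⁻¹ * (-((g A * Complex.exp (Complex.I * b * A)) *
      ((Real.exp (-ε * A) : ℝ) : ℂ)) - ∫ u in Ioi A, (g' u * Complex.exp (Complex.I * b * u)) *
      ((Real.exp (-ε * u) : ℝ) : ℂ)) := by
    intro ε hε
    have hder : ∀ x ∈ Ici A, HasDerivAt (fun u : ℝ => (g u * Complex.exp (Complex.I * b * u)) *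
      ((Real.exp (-ε * u) : ℝ) : ℂ)) ((Complex.I * b - ε : ℂ) *
      ((g x * Complex.exp (Complex.I * b * x)) * ((Real.exp (-ε * x) : ℝ) : ℂ)) +
      (g' x * Complex.exp (Complex.I * b * x)) * ((Real.exp (-ε * x) : ℝ) : ℂ)) x := by
      intro x hx
      have h1 : HasDerivAt (fun u : ℝ => Complex.exp (Complex.I * b * u))
          (Complex.exp (Complex.I * b * x) * (Complex.I * b * 1)) x :=
        ((Complex.ofRealCLM.hasDerivAt (x := x)).const_mul (Complex.I * b : ℂ)).cexp
      have h2 : HasDerivAt (fun u : ℝ => ((Real.exp (-ε * u) : ℝ) : ℂ))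
          ((Real.exp (-ε * x) * (-ε * 1) : ℝ) : ℂ) x :=
        (((hasDerivAt_id x).const_mul (-ε)).exp).ofReal_comp
      refine (((hd x hx).mul h1).mul h2).congr_deriv ?_
      simp only [Pi.mul_apply]
      push_cast
      ring
    have hlim : Tendsto (fun u : ℝ => (g u * Complex.exp (Complex.I * b * u)) *
      ((Real.exp (-ε * u) : ℝ) : ℂ)) atTop (𝓝 0) := by
      have h1 : Tendsto (fun u : ℝ => C * Real.exp (-ε * u)) atTop (𝓝 0) := by
        have := (Real.tendsto_exp_atBot.comp
          (tendsto_id.const_mul_atTop_of_neg (neg_neg_iff_pos.2 hε))).const_mul C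
        simpa using this
      refine squeeze_zero_norm' ?_ h1
      filter_upwards [Ioi_mem_atTop A] with u hu
      rw [norm_mul, norm_mul, hn, mul_one, Complex.norm_real, Real.norm_eq_abs,
        abs_of_pos (Real.exp_pos _)]
      exact mul_le_mul_of_nonneg_right (hC u hu) (Real.exp_pos _).le
    have h3 := integral_Ioi_of_hasDerivAt_of_tendsto' hder
      (((hint ε hε).const_mul _).add (hi2 ε hε)) hlim
    rw [integral_add ((hint ε hε).const_mul _) (hi2 ε hε), integral_const_mul] at h3
    rw [eq_inv_mul_iff_mul_eq₀ (hne ε)]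
    linear_combination h3
  have hinv : Tendsto (fun ε : ℝ => (Complex.I * b - ε : ℂ)⁻¹) (𝓝[>] 0)
      (𝓝 ((Complex.I * b - (0:ℝ) : ℂ)⁻¹)) := by
    have hc : Continuous (fun ε : ℝ => (Complex.I * b - ε : ℂ)⁻¹) :=
      Continuous.inv₀ (by fun_prop) hne
    exact (hc.tendsto 0).mono_left nhdsWithin_le_nhds
  have hbd : Tendsto (fun ε : ℝ => -((g A * Complex.exp (Complex.I * b * A)) *
      ((Real.exp (-ε * A) : ℝ) : ℂ))) (𝓝[>] 0) (𝓝 (-((g A * Complex.exp (Complex.I * b * A)) *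
      ((Real.exp (-0 * A) : ℝ) : ℂ)))) := by
    have hc : Continuous (fun ε : ℝ => -((g A * Complex.exp (Complex.I * b * A)) *
      ((Real.exp (-ε * A) : ℝ) : ℂ))) := by fun_prop
    exact (hc.tendsto 0).mono_left nhdsWithin_le_nhds
  refine ⟨_, (hinv.mul (hbd.sub ht2)).congr' ?_⟩
  filter_upwards [self_mem_nhdsWithin] with ε hε
  exact (key ε hε).symm

lemma head_integrable (z : ℂ) (h : ℝ → ℂ) (hcont : ContinuousOn h (Ioi 0))
    (ρ : ℝ) (hρ : ρ + z.re > 0) (hh0 : h =O[𝓝[>] (0 : ℝ)] fun u => u ^ ρ) (A : ℝ) (hA : 0 < A) :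
    IntegrableOn (fun u : ℝ => (u : ℂ) ^ (z - 1) * h u) (Ioc 0 A) := by
  have hm : MellinConvergent ((Iic A).indicator h) z := by
    refine mellinConvergent_of_isBigO_rpow (a := z.re + 1) (b := -ρ) ?_ ?_ (by linarith) ?_
      (by linarith)
    · intro x hx
      obtain ⟨U, hU, hUi⟩ := (hcont.locallyIntegrableOn (μ := volume) measurableSet_Ioi) x hx
      exact ⟨U, hU, hUi.indicator measurableSet_Iic⟩
    · refine (isBigO_zero _ _).congr' ?_ EventuallyEq.rfl
      filter_upwards [Ioi_mem_atTop A] with u hu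
      rw [indicator_of_notMem]
      simpa using hu
    · rw [neg_neg]
      refine hh0.congr' ?_ EventuallyEq.rfl
      filter_upwards [mem_nhdsWithin_of_mem_nhds (Iio_mem_nhds hA)] with u hu
      rw [indicator_of_mem]
      exact mem_Iic.2 (le_of_lt (mem_Iio.1 hu))
  refine (IntegrableOn.mono_set hm Ioc_subset_Ioi_self).congr_fun ?_ measurableSet_Ioc
  intro u hu
  simp only [smul_eq_mul]
  rw [indicator_of_mem]
  exact hu.2



/-- **Existence of the generalized Mellin transform.**
Let `b ≠ 0`, `β > 0`, `z ∈ ℂ` with `Re z < β + 1`.  Let `h : (0,∞) → ℂ` be continuous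
with `h(u) = O(u^ρ)` as `u → 0+` where `ρ + Re z > 0`, and suppose that for `u ≥ 1` one
can write `h(u) = e^{ibu} φ(u)` with `φ` continuously differentiable on `[1,∞)`,
`φ(u) = O(u^{−β})` and `φ′(u) = O(u^{−β−1})` as `u → +∞`.  Then the generalized Mellin
transform `M[h; z] = lim_{ε→0+} ∫_0^∞ u^{z−1} h(u) e^{−εu} du` exists. -/
theorem generalized_mellin_exists (b : ℝ) (hb : b ≠ 0) (β : ℝ) (hβ : 0 < β)
    (z : ℂ) (hz : z.re < β + 1)
    (h : ℝ → ℂ) (hcont : ContinuousOn h (Ioi 0))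
    (ρ : ℝ) (hρ : ρ + z.re > 0)
    (hh0 : h =O[𝓝[>] (0 : ℝ)] fun u => u ^ ρ)
    (φ : ℝ → ℂ) (hφ : ContDiffOn ℝ 1 φ (Ici 1))
    (hhφ : ∀ u : ℝ, 1 ≤ u → h u = Complex.exp (Complex.I * b * u) * φ u)
    (hφO : φ =O[atTop] fun u : ℝ => u ^ (-β))
    (hφ'O : deriv φ =O[atTop] fun u : ℝ => u ^ (-β - 1)) :
    ∃ L : ℂ, Tendsto (fun ε : ℝ => ∫ u in Ioi (0 : ℝ),
        (u : ℂ) ^ (z - 1) * h u * ((Real.exp (-ε * u) : ℝ) : ℂ))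
      (𝓝[>] 0) (𝓝 L) := by

  obtain ⟨C₁, hC₁p, hC₁⟩ := hφO.exists_pos
  obtain ⟨C₂, hC₂p, hC₂⟩ := hφ'O.exists_pos
  obtain ⟨A, hA⟩ := eventually_atTop.1 ((hC₁.bound.and hC₂.bound).and (eventually_ge_atTop (2:ℝ)))
  have hA2 : 2 ≤ A := (hA A le_rfl).2
  have hA0 : 0 < A := by linarith
  have hφd : ∀ x ∈ Ioi (1:ℝ), HasDerivAt φ (deriv φ x) x := fun x hx =>
    ((hφ.differentiableOn one_ne_zero x (mem_Ici.2 <| le_of_lt (mem_Ioi.1 hx))).differentiableAt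
      (Ici_mem_nhds hx)).hasDerivAt
  have hφ'c : ContinuousOn (deriv φ) (Ioi 1) :=
    (hφ.mono Ioi_subset_Ici_self).continuousOn_deriv_of_isOpen isOpen_Ioi le_rfl
  have hcd : ∀ x ∈ Ioi (0:ℝ), HasDerivAt (fun u : ℝ => (u : ℂ) ^ (z - 1))
      ((z - 1) * (x : ℂ) ^ (z - 1 - 1)) x := fun x hx =>
    (Complex.hasStrictDerivAt_cpow_const
      (Complex.ofReal_mem_slitPlane.2 hx)).hasDerivAt.comp_ofReal
  have hcc : ∀ w : ℂ, ContinuousOn (fun u : ℝ => (u : ℂ) ^ w) (Ioi 0) := fun w x hx =>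
    (Complex.hasStrictDerivAt_cpow_const (c := w)
      (Complex.ofReal_mem_slitPlane.2 hx)).hasDerivAt.comp_ofReal.continuousAt.continuousWithinAt
  have hb1 : ∀ x, A ≤ x → ‖φ x‖ ≤ C₁ * x ^ (-β) := fun x hx => by
    have := (hA x hx).1.1
    rwa [Real.norm_of_nonneg (Real.rpow_nonneg (by linarith) _)] at this
  have hb2 : ∀ x, A ≤ x → ‖deriv φ x‖ ≤ C₂ * x ^ (-β - 1) := fun x hx => by
    have := (hA x hx).1.2
    rwa [Real.norm_of_nonneg (Real.rpow_nonneg (by linarith) _)] at this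
  have hsub0 : Ioi A ⊆ Ioi 0 := Ioi_subset_Ioi hA0.le
  have hsub1 : Ioi A ⊆ Ioi 1 := Ioi_subset_Ioi (by linarith)
  obtain ⟨hti, L₂, hL₂⟩ := abel_tail b hb A hA0 (fun u : ℝ => (u : ℂ) ^ (z - 1) * φ u)
    (fun x : ℝ => ((z - 1) * (x : ℂ) ^ (z - 1 - 1)) * φ x + (x : ℂ) ^ (z - 1) * deriv φ x) C₁
    (fun x hx => (hcd x (lt_of_lt_of_le hA0 hx)).mul
      (hφd x (lt_of_lt_of_le (by linarith) (mem_Ici.1 hx)))) (by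
      refine Integrable.mono' (g := fun x : ℝ => (‖z - 1‖ * C₁ + C₂) * x ^ (z.re - 2 - β))
        ((integrableOn_Ioi_rpow_of_lt (by linarith) hA0).const_mul _) ?_ ?_
      · refine ContinuousOn.aestronglyMeasurable ?_ measurableSet_Ioi
        have hφc : ContinuousOn φ (Ioi A) := fun x hx =>
          (hφd x (hsub1 hx)).continuousAt.continuousWithinAt
        exact ((continuousOn_const.mul ((hcc _).mono hsub0)).mul hφc).add
          (((hcc _).mono hsub0).mul (hφ'c.mono hsub1))
      · refine (ae_restrict_iff' measurableSet_Ioi).2 (ae_of_all _ fun x hx => ?_)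
        have hx0 : 0 < x := hsub0 hx
        have e1 : x ^ (z.re - 2 - β) = x ^ (z.re - 2) * x ^ (-β) := by
          rw [← Real.rpow_add hx0]; ring_nf
        have e2 : x ^ (z.re - 2 - β) = x ^ (z.re - 1) * x ^ (-β - 1) := by
          rw [← Real.rpow_add hx0]; ring_nf
        have n1 : ‖(x : ℂ) ^ (z - 1 - 1)‖ = x ^ (z.re - 2) := by
          rw [Complex.norm_cpow_eq_rpow_re_of_pos hx0]
          congr 1; simp; ring
        have n2 : ‖(x : ℂ) ^ (z - 1)‖ = x ^ (z.re - 1) := by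
          rw [Complex.norm_cpow_eq_rpow_re_of_pos hx0]
          simp
        calc _ ≤ ‖z - 1‖ * x ^ (z.re - 2) * ‖φ x‖ + x ^ (z.re - 1) * ‖deriv φ x‖ := by
              refine (norm_add_le _ _).trans ?_
              simp only [norm_mul, n1, n2]; exact le_rfl
          _ ≤ ‖z - 1‖ * x ^ (z.re - 2) * (C₁ * x ^ (-β)) +
              x ^ (z.re - 1) * (C₂ * x ^ (-β - 1)) := by
              gcongr
              · exact hb1 x (le_of_lt (mem_Ioi.1 hx))
              · exact hb2 x (le_of_lt (mem_Ioi.1 hx))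
          _ = _ := by
              rw [add_mul]
              nth_rewrite 1 [e1]
              rw [e2]; ring) (by
      intro x hx
      have hx0 : 0 < x := hsub0 hx
      rw [norm_mul, Complex.norm_cpow_eq_rpow_re_of_pos hx0]
      calc _ ≤ x ^ (z - 1).re * (C₁ * x ^ (-β)) := by
            gcongr; exact hb1 x (le_of_lt (mem_Ioi.1 hx))
        _ = C₁ * x ^ (z.re - 1 - β) := by
            have : x ^ (z.re - 1 - β) = x ^ (z - 1).re * x ^ (-β) := by
              rw [← Real.rpow_add hx0]; simp; ring_nf
            rw [this]; ring
        _ ≤ C₁ * 1 := by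
            gcongr
            exact Real.rpow_le_one_of_one_le_of_nonpos (le_of_lt (mem_Ioi.1 (hsub1 hx))) (by linarith)
        _ = C₁ := mul_one _)
  obtain ⟨hhi, hL₁⟩ := abel_tendsto (Ioc 0 A) measurableSet_Ioc Ioc_subset_Ioi_self _
    (head_integrable z h hcont ρ hρ hh0 A hA0)
  refine ⟨_, (hL₁.add hL₂).congr' ?_⟩
  filter_upwards [self_mem_nhdsWithin] with ε hε
  have heq : EqOn (fun u : ℝ => ((u : ℂ) ^ (z - 1) * φ u * Complex.exp (Complex.I * b * u)) *
      ((Real.exp (-ε * u) : ℝ) : ℂ))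
      (fun u : ℝ => (u : ℂ) ^ (z - 1) * h u * ((Real.exp (-ε * u) : ℝ) : ℂ)) (Ioi A) := by
    intro u hu
    simp only
    rw [hhφ u (le_of_lt (mem_Ioi.1 (hsub1 hu)))]
    ring
  rw [setIntegral_congr_fun measurableSet_Ioi heq, ← setIntegral_union
    (Ioc_disjoint_Ioi le_rfl) measurableSet_Ioi (hhi ε hε)
    ((hti ε hε).congr_fun heq measurableSet_Ioi), Ioc_union_Ioi_eq_Ioi hA0.le]
end
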